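/- arXiv:math/0204278 — 4 statements merged into one kernel-verified Lean document; each statement's English description precedes it below -/
import Mathlib

section
/- Let ℓ ≥ 2 be an integer and k = 4ℓ − 4. Define the (k+1)×(k+1) integer matrix Z (rows and columns indexed by λ, μ ∈ {0, 1, …, k}) by Z_{λ,μ} = [λ even]·([λ = μ] + [λ + μ = k]), where [P] is 1 if P holds and 0 otherwise. Then Z is symmetric and Z·Z = 2Z. -/
open Matrix

/-- The coupling matrix of the `D_{2ℓ}` modular invariant of `SU(2)` at level `k = 4ℓ-4`:
`Z_{λ,μ} = [λ even]·([λ = μ] + [λ + μ = k])`. -/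
def ZDeven (k : ℕ) : Matrix (Fin (k + 1)) (Fin (k + 1)) ℤ :=
  Matrix.of fun l m =>
    if Even (l : ℕ) then (if l = m then 1 else 0) + (if (l : ℕ) + (m : ℕ) = k then 1 else 0)
    else 0

theorem ZDeven_apply (k : ℕ) (i j : Fin (k + 1)) : ZDeven k i j =
    if Even (i : ℕ) then (if i = j then 1 else 0) + (if j = Fin.rev i then 1 else 0) else 0 := by
  have h : ((i : ℕ) + (j : ℕ) = k) ↔ j = Fin.rev i := by
    rw [Fin.ext_iff, Fin.val_rev]; omega
  simp only [ZDeven, Matrix.of_apply, h]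

theorem ZDeven_rev (k : ℕ) (hk : Even k) (i j : Fin (k + 1)) :
    ZDeven k (Fin.rev i) j = ZDeven k i j := by
  have h : Even ((Fin.rev i : Fin (k + 1)) : ℕ) ↔ Even (i : ℕ) := by
    have hi := i.isLt
    rw [Fin.val_rev]
    simp only [Nat.even_iff] at *
    omega
  simp only [ZDeven_apply, h, Fin.rev_rev, eq_comm (a := j)]
  split_ifs <;> simp

/-- The fusion rule `Z_{D_{2ℓ}}² = 2 Z_{D_{2ℓ}}` of `SU(2)` modular invariants. -/
theorem stmt3 (ℓ : ℕ) (hℓ : 2 ≤ ℓ) :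
    (ZDeven (4 * ℓ - 4))ᵀ = ZDeven (4 * ℓ - 4) ∧
      ZDeven (4 * ℓ - 4) * ZDeven (4 * ℓ - 4) = 2 • ZDeven (4 * ℓ - 4) := by
  have hk : Even (4 * ℓ - 4) := by rw [Nat.even_iff]; omega
  generalize 4 * ℓ - 4 = k at hk
  constructor
  · ext i j
    have hi := i.isLt
    have hj := j.isLt
    simp only [Matrix.transpose_apply, ZDeven, Matrix.of_apply, Nat.even_iff, Fin.ext_iff] at *
    split_ifs <;> first | rfl | omega
  · ext i j
    rw [Matrix.mul_apply, Matrix.smul_apply]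
    by_cases hi : Even (i : ℕ)
    · have : ∀ x, ZDeven k i x * ZDeven k x j =
          (if i = x then ZDeven k x j else 0) + (if x = Fin.rev i then ZDeven k x j else 0) := by
        intro x
        rw [ZDeven_apply k i x, if_pos hi, add_mul, ite_mul, ite_mul, one_mul, zero_mul]
      simp only [this, Finset.sum_add_distrib, Finset.sum_ite_eq, Finset.sum_ite_eq',
        Finset.mem_univ, if_true, ZDeven_rev k hk]
      rw [two_smul]
    · simp [ZDeven_apply k i, hi]
end

section
/- Let e₀, …, e₁₆ denote the standard basis (column) vectors of ℤ¹⁷, and set a = e₀ + e₁₆, b = e₄ + e₁₂, c = e₆ + e₁₀, d = e₂ + e₁₄. Define Z_{E₇} = a·aᵀ + b·bᵀ + c·cᵀ + e₈·e₈ᵀ + e₈·dᵀ + d·e₈ᵀ and Z_{D₁₀} the 17×17 matrix with entries (Z_{D₁₀})_{λ,μ} = [λ even]·([λ = μ] + [λ + μ = 16]). Then Z_{E₇}·Z_{E₇} = Z_{D₁₀} + Z_{E₇}. -/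
open Matrix

/-- The standard basis vectors of `ℤ¹⁷`. -/
def e17 (j : Fin 17) : Fin 17 → ℤ := fun i => if i = j then 1 else 0

/-- The coupling matrix of the `E₇` modular invariant of `SU(2)` at level 16,
`Z = |χ₀+χ₁₆|² + |χ₄+χ₁₂|² + |χ₆+χ₁₀|² + |χ₈|² + χ₈(χ₂+χ₁₄)* + (χ₂+χ₁₄)χ₈*`. -/
def ZE7 : Matrix (Fin 17) (Fin 17) ℤ :=
  vecMulVec (e17 0 + e17 16) (e17 0 + e17 16) +
    vecMulVec (e17 4 + e17 12) (e17 4 + e17 12) +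
      vecMulVec (e17 6 + e17 10) (e17 6 + e17 10) +
        vecMulVec (e17 8) (e17 8) +
          vecMulVec (e17 8) (e17 2 + e17 14) +
            vecMulVec (e17 2 + e17 14) (e17 8)

/-- The coupling matrix of the `D₁₀` modular invariant of `SU(2)` at level 16:
`(Z_{D₁₀})_{λ,μ} = [λ even]·([λ = μ] + [λ + μ = 16])`. -/
def ZD10 : Matrix (Fin 17) (Fin 17) ℤ :=
  Matrix.of fun l m =>
    if Even (l : ℕ) then (if l = m then 1 else 0) + (if (l : ℕ) + (m : ℕ) = 16 then 1 else 0)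
    else 0

/-- Dot products of the standard basis vectors. -/
theorem e17_dot (i j : Fin 17) : e17 i ⬝ᵥ e17 j = if i = j then 1 else 0 := by
  simp [e17, dotProduct, eq_comm]

/-- `Z_{D₁₀}` as a sum of rank one matrices. -/
theorem ZD10_eq : ZD10 =
    vecMulVec (e17 0 + e17 16) (e17 0 + e17 16) +
    vecMulVec (e17 4 + e17 12) (e17 4 + e17 12) +
    vecMulVec (e17 6 + e17 10) (e17 6 + e17 10) +
    vecMulVec (e17 2 + e17 14) (e17 2 + e17 14) +
    (2 : ℤ) • vecMulVec (e17 8) (e17 8) := by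
  ext i j
  simp only [ZD10, Matrix.of_apply, Matrix.add_apply, Matrix.smul_apply, vecMulVec_apply,
    Pi.add_apply, e17, smul_eq_mul]
  revert i j
  decide +kernel

/-- The fusion rule `Z_{E₇}² = Z_{D₁₀} + Z_{E₇}` of `SU(2)` modular invariants at level 16. -/
theorem stmt6 : ZE7 * ZE7 = ZD10 + ZE7 := by
  rw [ZD10_eq]
  simp only [ZE7, add_mul, mul_add, vecMulVec_mul_vecMulVec, add_dotProduct, dotProduct_add,
    e17_dot, vecMulVec_smul]
  simp [Fin.ext_iff, two_mul]
  abel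
end

section
/- Let e₀, …, e₁₆ denote the standard basis (column) vectors of ℤ¹⁷, and set a = e₀ + e₁₆, b = e₄ + e₁₂, c = e₆ + e₁₀, d = e₂ + e₁₄. Define Z_{E₇} = a·aᵀ + b·bᵀ + c·cᵀ + e₈·e₈ᵀ + e₈·dᵀ + d·e₈ᵀ and Z_{D₁₀} the 17×17 matrix with entries (Z_{D₁₀})_{λ,μ} = [λ even]·([λ = μ] + [λ + μ = 16]). Then Z_{D₁₀}·Z_{E₇} = Z_{E₇}·Z_{D₁₀} = 2·Z_{E₇}. -/
open Matrix

/-- `Z_{D₁₀}` is a symmetric matrix. -/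
lemma ZD10_symm : ZD10ᵀ = ZD10 := by
  decide +kernel

lemma ZD10_mulVec_a : ZD10 *ᵥ (e17 0 + e17 16) = (2 : ℤ) • (e17 0 + e17 16) := by
  decide +kernel

lemma ZD10_mulVec_b : ZD10 *ᵥ (e17 4 + e17 12) = (2 : ℤ) • (e17 4 + e17 12) := by
  decide +kernel

lemma ZD10_mulVec_c : ZD10 *ᵥ (e17 6 + e17 10) = (2 : ℤ) • (e17 6 + e17 10) := by
  decide +kernel

lemma ZD10_mulVec_d : ZD10 *ᵥ (e17 2 + e17 14) = (2 : ℤ) • (e17 2 + e17 14) := by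
  decide +kernel

lemma ZD10_mulVec_e : ZD10 *ᵥ (e17 8) = (2 : ℤ) • (e17 8) := by
  decide +kernel

lemma vecMul_ZD10 (v : Fin 17 → ℤ) : v ᵥ* ZD10 = ZD10 *ᵥ v := by
  rw [← vecMul_transpose, ZD10_symm]

lemma ZD10_mul_ZE7 : ZD10 * ZE7 = (2 : ℤ) • ZE7 := by
  simp only [ZE7, Matrix.mul_add, mul_vecMulVec, ZD10_mulVec_a, ZD10_mulVec_b, ZD10_mulVec_c,
    ZD10_mulVec_d, ZD10_mulVec_e, smul_vecMulVec]
  simp only [smul_add]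

lemma ZE7_mul_ZD10 : ZE7 * ZD10 = (2 : ℤ) • ZE7 := by
  simp only [ZE7, Matrix.add_mul, vecMulVec_mul, vecMul_ZD10, ZD10_mulVec_a, ZD10_mulVec_b,
    ZD10_mulVec_c, ZD10_mulVec_d, ZD10_mulVec_e, vecMulVec_smul]
  simp only [smul_add]

/-- The fusion rule `Z_{D₁₀}Z_{E₇} = Z_{E₇}Z_{D₁₀} = 2Z_{E₇}` of `SU(2)` modular invariants at level 16. -/
theorem stmt7 : ZD10 * ZE7 = ZE7 * ZD10 ∧ ZE7 * ZD10 = 2 • ZE7 := by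
  refine ⟨ZD10_mul_ZE7.trans ZE7_mul_ZD10.symm, ZE7_mul_ZD10.trans ?_⟩
  rw [two_smul, two_smul]
end

section
/- Let I be a finite set, let P and Q be disjoint subsets of I with |P| = 36 and |Q| = 28, and let f ∈ P. Let u, w ∈ ℤ^I be the indicator (column) vectors of P and Q respectively, and e = e_f the standard basis vector at f. Define the I×I integer matrices Z₁ = u·uᵀ + 32·e·eᵀ + w·wᵀ and Z_s = (u + 4e)·(u + 4e)ᵀ. Then Z₁·Z₁ = 28·Z₁ + 8·Z_s. -/
open Matrix

/-- The multiplication rule `Z₁·Z₁ = 28·Z₁ + 8·Z_s` for the two `SU(7)₇` modular invariants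
obtained by restricting the `SO(48)₁` invariants through `SU(7)₇ ⊂ SO(48)₁`. -/
theorem stmt11 {I : Type*} [Fintype I] [DecidableEq I]
    (P Q : Finset I) (hPQ : Disjoint P Q) (hP : P.card = 36) (hQ : Q.card = 28)
    (f : I) (hf : f ∈ P) :
    let u : I → ℤ := fun i => if i ∈ P then 1 else 0
    let w : I → ℤ := fun i => if i ∈ Q then 1 else 0
    let e : I → ℤ := fun i => if i = f then 1 else 0
    let Z1 : Matrix I I ℤ := vecMulVec u u + (32 : ℤ) • vecMulVec e e + vecMulVec w w
    let Zs : Matrix I I ℤ := vecMulVec (u + 4 • e) (u + 4 • e)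
    Z1 * Z1 = 28 • Z1 + 8 • Zs := by
  intro u w e Z1 Zs
  have hfQ : f ∉ Q := Finset.disjoint_left.mp hPQ hf
  have huu : u ⬝ᵥ u = 36 := by simp [u, dotProduct, hP]
  have hww : w ⬝ᵥ w = 28 := by simp [w, dotProduct, hQ]
  have hee : e ⬝ᵥ e = 1 := by simp [e, dotProduct]
  have hue : u ⬝ᵥ e = 1 := by simp [u, e, dotProduct, hf]
  have hwe : w ⬝ᵥ e = 0 := by simp [w, e, dotProduct, hfQ]
  have huw : u ⬝ᵥ w = 0 := by
    refine Finset.sum_eq_zero fun i _ => ?_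
    by_cases h : i ∈ P
    · simp [w, Finset.disjoint_left.mp hPQ h]
    · simp [u, h]
  have heu : e ⬝ᵥ u = 1 := by rw [dotProduct_comm, hue]
  have hew : e ⬝ᵥ w = 0 := by rw [dotProduct_comm, hwe]
  have hwu : w ⬝ᵥ u = 0 := by rw [dotProduct_comm, huw]
  clear_value u w e
  simp only [Z1, Zs, add_mul, mul_add, smul_mul_assoc, mul_smul_comm, vecMulVec_mul_vecMulVec,
    huu, hww, hee, hue, hwe, huw, heu, hew, hwu]
  ext i j
  simp only [vecMulVec_apply, Matrix.add_apply, Matrix.smul_apply, Pi.add_apply, Pi.smul_apply,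
    smul_eq_mul, zero_smul, smul_zero, Pi.zero_apply, Matrix.zero_apply, mul_zero, zero_mul]
  simp only [nsmul_eq_mul]
  push_cast
  ring
end
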